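/- Identify ℝ^m with ℝ^{m−n} × ℝ^n and let e_1, …, e_n be the constant vector fields given by the standard basis vectors of the second factor. Let U ⊆ ℝ^m be open, let F be a smooth vector field on U, set W_i := [F, e_i], and assume: (a) the 2n vectors e_1(z), …, e_n(z), W_1(z), …, W_n(z) are linearly independent at every z ∈ U; (b) [e_i, W_j](z) and [W_i, W_j](z) lie in 𝒲_z := span{e_1(z), …, e_n(z), W_1(z), …, W_n(z)} for all z ∈ U and all i, j. Then for every z₀ ∈ U there exist an open neighbourhood U' ⊆ U of z₀, a smooth map A : U' → (n×n real matrices) with invertible values such that Ṽ_i := A_i^j e_j satisfy [Ṽ_i, Ṽ_j] = 0, and a smooth diffeomorphism φ from U' onto an open subset of ℝ^{m−2n} × ℝ^n × ℝ^n with smooth inverse, such that for all z ∈ U' and all i: Dφ(z)(Ṽ_i(z)) = (0, 0, ε_i) and Dφ(z)([F, Ṽ_i](z)) + (0, ε_i, 0) ∈ {0} × {0} × ℝ^n, where ε_i denotes the i-th standard basis vector of ℝ^n. -/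

import Mathlib

/-- The Lie bracket of two vector fields (as maps `E → E`), defined via the
Fréchet derivative: `[X,Y](z) = DY(z)(X(z)) − DX(z)(Y(z))`. -/
noncomputable def lieB {E : Type*} [NormedAddCommGroup E] [NormedSpace ℝ E]
    (X Y : E → E) : E → E :=
  fun z => fderiv ℝ Y z (X z) - fderiv ℝ X z (Y z)

/-- The constant vector field `∂/∂y^i` on `ℝ^{m−n} × ℝ^n` (here `p = m − n`). -/
def eVec (p n : ℕ) (i : Fin n) : (Fin p → ℝ) × (Fin n → ℝ) := (0, Pi.single i 1)

open Set Filter Topology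
open scoped ContDiff unitInterval

universe u

section InverseFunction

variable {E F : Type*} [NormedAddCommGroup E] [NormedSpace ℝ E] [CompleteSpace E]
  [NormedAddCommGroup F] [NormedSpace ℝ F]

/-- The inverse function theorem for maps which are smooth on a neighbourhood of a point: the
local inverse can be chosen smooth on its whole domain, with range in a prescribed neighbourhood. -/
theorem exists_openPartialHomeomorph_contDiffAt {f : E → F} {a : E} {V : Set E}
    (hV : V ∈ 𝓝 a) (hf : ∀ᶠ x in 𝓝 a, ContDiffAt ℝ ∞ f x) (f' : E ≃L[ℝ] F)
    (hf' : HasFDerivAt f (f' : E →L[ℝ] F) a) :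
    ∃ e : OpenPartialHomeomorph E F, a ∈ e.source ∧ e.source ⊆ V ∧ ⇑e = f ∧
      (∀ x ∈ e.source, ContDiffAt ℝ ∞ f x) ∧ ∀ y ∈ e.target, ContDiffAt ℝ ∞ e.symm y := by
  have hfa : ContDiffAt ℝ ∞ f a := hf.self_of_nhds
  have hcont : ContinuousAt (fderiv ℝ f) a :=
    (hfa.fderiv_right (m := 0) (by simp)).continuousAt
  have hinv : ∀ᶠ x in 𝓝 a, fderiv ℝ f x ∈ range ((↑) : (E ≃L[ℝ] F) → E →L[ℝ] F) :=
    hcont (by rw [hf'.fderiv]; exact ContinuousLinearEquiv.nhds f')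
  obtain ⟨s, hs, hso, has⟩ := eventually_nhds_iff.1 (hf.and (hinv.and hV))
  set e₀ := hfa.toOpenPartialHomeomorph f hf' (by simp) with he₀
  have hcoe : (e₀.restrOpen s hso : E → F) = f := rfl
  have hsrc : ∀ x ∈ (e₀.restrOpen s hso).source, x ∈ s := fun x hx => hx.2
  refine ⟨e₀.restrOpen s hso, ⟨hfa.mem_toOpenPartialHomeomorph_source hf' (by simp), has⟩,
    fun x hx => (hs x (hsrc x hx)).2.2, hcoe, fun x hx => (hs x (hsrc x hx)).1, fun y hy => ?_⟩
  have hy' := hs _ (hsrc _ ((e₀.restrOpen s hso).map_target hy))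
  obtain ⟨g, hg⟩ := hy'.2.1
  refine (e₀.restrOpen s hso).contDiffAt_symm (f₀' := g) hy ?_ hy'.1
  rw [hg]
  exact (hy'.1.differentiableAt (by simp)).hasFDerivAt

end InverseFunction

namespace ContinuousMap

variable {K : Type*} [TopologicalSpace K] [CompactSpace K]
  {E F : Type u} [NormedAddCommGroup E] [NormedSpace ℝ E]
  [NormedAddCommGroup F] [NormedSpace ℝ F]

/-- Pointwise application of a continuous family of continuous linear maps, as a continuous
bilinear map. -/
noncomputable def applyL (K E F : Type*) [TopologicalSpace K] [CompactSpace K]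
    [NormedAddCommGroup E] [NormedSpace ℝ E] [NormedAddCommGroup F] [NormedSpace ℝ F] :
    C(K, E →L[ℝ] F) →L[ℝ] C(K, E) →L[ℝ] C(K, F) :=
  LinearMap.mkContinuous₂
    (LinearMap.mk₂ ℝ (fun (a : C(K, E →L[ℝ] F)) (v : C(K, E)) =>
      (⟨fun s => a s (v s), by fun_prop⟩ : C(K, F)))
      (fun _ _ _ => by ext; simp) (fun _ _ _ => by ext; simp)
      (fun _ _ _ => by ext; simp) (fun _ _ _ => by ext; simp)) 1 fun a v => by
    rw [one_mul]
    refine (ContinuousMap.norm_le _ (by positivity)).2 fun s => ?_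
    exact (a s).le_of_opNorm_le_of_le (a.norm_coe_le_norm s) (v.norm_coe_le_norm s)

@[simp]
theorem applyL_apply (a : C(K, E →L[ℝ] F)) (v : C(K, E)) (s : K) :
    applyL K E F a v s = a s (v s) := rfl

/-- The superposition operator `γ ↦ h ∘ γ` of a `C¹` map `h` is differentiable. -/
theorem hasFDerivAt_comp {h : E → F} (hh : Differentiable ℝ h) (hc : Continuous (fderiv ℝ h))
    (γ : C(K, E)) :
    HasFDerivAt (fun γ : C(K, E) => (ContinuousMap.mk h hh.continuous).comp γ)
      (applyL K E F ((ContinuousMap.mk (fderiv ℝ h) hc).comp γ)) γ := by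
  rw [hasFDerivAt_iff_isLittleO, Asymptotics.isLittleO_iff]
  intro ε hε
  have hcont := (ContinuousMap.continuous_postcomp (X := K)
    (ContinuousMap.mk (fderiv ℝ h) hc)).continuousAt (x := γ)
  obtain ⟨δ, hδ, hball⟩ := (Metric.continuousAt_iff (α := C(K, E)) (β := C(K, E →L[ℝ] F))).1
    hcont ε hε
  filter_upwards [Metric.ball_mem_nhds γ hδ] with γ' hγ'
  refine (ContinuousMap.norm_le _ (by positivity)).2 fun s => ?_
  have hseg : ∀ x ∈ segment ℝ (γ s) (γ' s), ‖fderiv ℝ h x - fderiv ℝ h (γ s)‖ ≤ ε := by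
    intro x hx
    rw [segment_eq_image_lineMap] at hx
    obtain ⟨r, hr, rfl⟩ := hx
    have hmem : AffineMap.lineMap γ γ' r ∈ Metric.ball γ δ :=
      (convex_ball γ δ).lineMap_mem (Metric.mem_ball_self hδ) hγ' hr
    have h1 := (ContinuousMap.dist_apply_le_dist s).trans (hball hmem).le
    rw [dist_eq_norm] at h1
    have hx : AffineMap.lineMap (γ s) (γ' s) r = (AffineMap.lineMap γ γ' r : C(K, E)) s := by
      simp [AffineMap.lineMap_apply]
    rw [hx]
    exact h1
  have h2 := (convex_segment (γ s) (γ' s)).norm_image_sub_le_of_norm_fderiv_le'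
    (fun x _ => hh x) hseg (left_mem_segment ℝ _ _) (right_mem_segment ℝ _ _)
  refine h2.trans ?_
  gcongr
  exact (γ' - γ).norm_coe_le_norm s

theorem contDiff_nat_comp (n : ℕ) : ∀ {F : Type u} [NormedAddCommGroup F] [NormedSpace ℝ F]
    {h : E → F} (hh : ContDiff ℝ n h),
    ContDiff ℝ n (fun γ : C(K, E) => (ContinuousMap.mk h hh.continuous).comp γ) := by
  induction n with
  | zero =>
    intro F _ _ h hh
    exact contDiff_zero.2 (ContinuousMap.continuous_postcomp _)
  | succ n ih =>
    intro F _ _ h hh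
    have hh' : ContDiff ℝ ((n : WithTop ℕ∞) + 1) h := by exact_mod_cast hh
    have hd : ContDiff ℝ n (fderiv ℝ h) := (contDiff_succ_iff_fderiv.1 hh').2.2
    have hdiff : Differentiable ℝ h := (contDiff_succ_iff_fderiv.1 hh').1
    have hL : ContDiff ℝ n (applyL K E F) := ContinuousLinearMap.contDiff _
    have key : ContDiff ℝ ((n : WithTop ℕ∞) + 1)
        (fun γ : C(K, E) => (ContinuousMap.mk h hh.continuous).comp γ) :=
      contDiff_succ_iff_hasFDerivAt.2 ⟨fun γ =>
        applyL K E F ((ContinuousMap.mk (fderiv ℝ h) hd.continuous).comp γ),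
        hL.comp (ih hd),
        fun γ => hasFDerivAt_comp hdiff hd.continuous γ⟩
    exact_mod_cast key

/-- The superposition operator `γ ↦ h ∘ γ` of a smooth map `h` is smooth. -/
theorem contDiff_comp {h : E → F} (hh : ContDiff ℝ ∞ h) :
    ContDiff ℝ ∞ (fun γ : C(K, E) => (ContinuousMap.mk h hh.continuous).comp γ) :=
  contDiff_infty.2 fun n => contDiff_nat_comp n (hh.of_le (mod_cast le_top))

/-- Constant functions, as a continuous linear map. -/
noncomputable def constL (K E : Type*) [TopologicalSpace K] [CompactSpace K]
    [NormedAddCommGroup E] [NormedSpace ℝ E] : E →L[ℝ] C(K, E) :=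
  LinearMap.mkContinuous
    { toFun := ContinuousMap.const K
      map_add' := fun _ _ => rfl
      map_smul' := fun _ _ => rfl } 1 fun v => by
    rw [one_mul]
    exact (ContinuousMap.norm_le _ (by positivity)).2 fun s => le_rfl

@[simp]
theorem constL_apply (v : E) (s : K) : constL K E v s = v := rfl

end ContinuousMap

section Primitive

variable {E : Type*} [NormedAddCommGroup E] [NormedSpace ℝ E]

theorem continuous_comp_projIcc {E : Type*} [TopologicalSpace E] (v : C(I, E)) :
    Continuous fun r : ℝ => v (projIcc 0 1 zero_le_one r) :=
  v.continuous.comp continuous_projIcc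

/-- The primitive vanishing at `0` of a continuous function on the unit interval, as a continuous
linear map. -/
noncomputable def primitiveL (E : Type*) [NormedAddCommGroup E] [NormedSpace ℝ E] :
    C(I, E) →L[ℝ] C(I, E) :=
  LinearMap.mkContinuous
    { toFun := fun v => ⟨fun s => ∫ r in (0 : ℝ)..s, v (projIcc 0 1 zero_le_one r),
        (intervalIntegral.continuous_primitive
          (fun a b => (continuous_comp_projIcc v).intervalIntegrable a b) 0).comp
          continuous_subtype_val⟩
      map_add' := fun v w => by
        ext s
        exact intervalIntegral.integral_add ((continuous_comp_projIcc v).intervalIntegrable _ _)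
          ((continuous_comp_projIcc w).intervalIntegrable _ _)
      map_smul' := fun c v => by
        ext s
        exact intervalIntegral.integral_smul c _ } 1 fun v => by
    rw [one_mul]
    refine (ContinuousMap.norm_le _ (by positivity)).2 fun s => ?_
    refine (intervalIntegral.norm_integral_le_of_norm_le_const (C := ‖v‖)
      fun r _ => v.norm_coe_le_norm _).trans ?_
    rw [sub_zero, abs_of_nonneg s.2.1]
    exact mul_le_of_le_one_right (norm_nonneg _) s.2.2

theorem primitiveL_apply (v : C(I, E)) (s : I) :
    primitiveL E v s = ∫ r in (0 : ℝ)..s, v (projIcc 0 1 zero_le_one r) := rfl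

end Primitive

section Exponential

theorem hasFDerivAt_sub_bilinear {E H D R Q : Type*} [NormedAddCommGroup E] [NormedSpace ℝ E]
    [NormedAddCommGroup H] [NormedSpace ℝ H] [NormedAddCommGroup D] [NormedSpace ℝ D]
    [NormedAddCommGroup R] [NormedSpace ℝ R] [NormedAddCommGroup Q] [NormedSpace ℝ Q]
    {N : E → D} {N' : E →L[ℝ] D} {γ : E} (hN : HasFDerivAt N N' γ)
    (P : R →L[ℝ] E) (B : D →L[ℝ] Q →L[ℝ] R) (c : H →L[ℝ] Q) (h : H) :
    HasFDerivAt (fun x : E × H => (x.1 - P (B (N x.1) (c x.2)), x.2))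
      ((ContinuousLinearMap.fst ℝ E H - P.comp
        ((B (N γ)).comp (c.comp (ContinuousLinearMap.snd ℝ E H)) +
          (B.comp (N'.comp (ContinuousLinearMap.fst ℝ E H))).flip (c h))).prod
        (ContinuousLinearMap.snd ℝ E H)) (γ, h) := by
  refine HasFDerivAt.prodMk (hasFDerivAt_fst.sub (P.hasFDerivAt.comp (γ, h) ?_)) hasFDerivAt_snd
  have h1 : HasFDerivAt (fun x : E × H => N x.1)
      (N'.comp (ContinuousLinearMap.fst ℝ E H)) (γ, h) :=
    HasFDerivAt.comp (g := N) (γ, h) hN hasFDerivAt_fst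
  exact (B.hasFDerivAt.comp (γ, h) h1).clm_apply (c.hasFDerivAt.comp (γ, h) hasFDerivAt_snd)

variable {E H : Type u} [NormedAddCommGroup E] [NormedSpace ℝ E] [CompleteSpace E]
  [NormedAddCommGroup H] [NormedSpace ℝ H]

open ContinuousMap

/-- Along a solution of `γ' = Y(γ) h`, the curve `s ↦ s Y(γ(s)) w` solves the linearised equation,
provided the vector fields `Y(·) h` and `Y(·) w` commute. -/
theorem smul_eq_primitiveL_of_commute {Y : E → H →L[ℝ] E} (hY : ContDiff ℝ ∞ Y) {γ : C(I, E)}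
    {p : E} {h w : H}
    (hγ : ∀ s : I, γ s = p + ∫ r in (0 : ℝ)..s, Y (γ (projIcc 0 1 zero_le_one r)) h)
    (hcomm : ∀ s, fderiv ℝ Y (γ s) (Y (γ s) h) w = fderiv ℝ Y (γ s) (Y (γ s) w) h) (s : I) :
    (s : ℝ) • Y (γ s) w = ∫ r in (0 : ℝ)..s,
      (fderiv ℝ Y (γ (projIcc 0 1 zero_le_one r))
          (((projIcc 0 1 zero_le_one r : I) : ℝ) • Y (γ (projIcc 0 1 zero_le_one r)) w) h +
        Y (γ (projIcc 0 1 zero_le_one r)) w) := by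
  have hYc : Continuous Y := hY.continuous
  have hY' : Continuous (fderiv ℝ Y) := hY.continuous_fderiv (by simp)
  have hγc : Continuous fun r : ℝ => γ (projIcc 0 1 zero_le_one r) := continuous_comp_projIcc γ
  have hpc : Continuous fun r : ℝ => ((projIcc 0 1 zero_le_one r : I) : ℝ) :=
    continuous_subtype_val.comp continuous_projIcc
  set g : ℝ → E := fun s => p + ∫ r in (0 : ℝ)..s, Y (γ (projIcc 0 1 zero_le_one r)) h with hg
  have hgγ : ∀ s : I, g s = γ s := fun s => (hγ s).symm
  have hgd : ∀ s, HasDerivAt g (Y (γ (projIcc 0 1 zero_le_one s)) h) s := fun s =>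
    (intervalIntegral.integral_hasDerivAt_right
      (Continuous.intervalIntegrable (by fun_prop) _ _)
      (Continuous.stronglyMeasurableAtFilter (by fun_prop) _ _)
      (Continuous.continuousAt (by fun_prop))).const_add p
  have hd : ∀ r ∈ uIcc (0 : ℝ) s, HasDerivAt (fun r => r • Y (g r) w)
      (fderiv ℝ Y (γ (projIcc 0 1 zero_le_one r))
          (((projIcc 0 1 zero_le_one r : I) : ℝ) • Y (γ (projIcc 0 1 zero_le_one r)) w) h +
        Y (γ (projIcc 0 1 zero_le_one r)) w) r := by
    intro r hr
    rw [uIcc_of_le s.2.1] at hr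
    have hrI : r ∈ Icc (0 : ℝ) 1 := ⟨hr.1, hr.2.trans s.2.2⟩
    rw [projIcc_of_mem zero_le_one hrI]
    have hgr : g r = γ ⟨r, hrI⟩ := hgγ ⟨r, hrI⟩
    have h1 := hgd r
    rw [projIcc_of_mem zero_le_one hrI] at h1
    have h2 : HasDerivAt (fun r => Y (g r)) (fderiv ℝ Y (g r) (Y (γ ⟨r, hrI⟩) h)) r :=
      ((hY.differentiable (by simp)) (g r)).hasFDerivAt.comp_hasDerivAt r h1
    have h3 : HasDerivAt (fun r => Y (g r) w) (fderiv ℝ Y (g r) (Y (γ ⟨r, hrI⟩) h) w) r := by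
      simpa using h2.clm_apply (hasDerivAt_const r w)
    refine ((hasDerivAt_id r).smul h3).congr_deriv ?_
    rw [hgr, hcomm]
    simp [add_comm]
  rw [intervalIntegral.integral_eq_sub_of_hasDerivAt hd
    (Continuous.intervalIntegrable (by fun_prop) _ _)]
  simp [hgγ]

/-- Smooth dependence on the parameters `(p, h)` of the solution `γ` of a fixed point equation
`γ = p + P (B (N γ) (c h))`, near `h = 0`. -/
theorem exists_contDiffAt_fixedPoint [CompleteSpace H] {D R Q : Type*}
    [NormedAddCommGroup D] [NormedSpace ℝ D]
    [NormedAddCommGroup R] [NormedSpace ℝ R] [NormedAddCommGroup Q] [NormedSpace ℝ Q]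
    {N : E → D} (hN : ContDiff ℝ ∞ N) (P : R →L[ℝ] E) (B : D →L[ℝ] Q →L[ℝ] R) (c : H →L[ℝ] Q)
    {γ₀ : E} {V : Set E} (hV : V ∈ 𝓝 γ₀) :
    ∃ S : E × H → E, (∀ᶠ x in 𝓝 (γ₀, (0 : H)), ContDiffAt ℝ ∞ S x ∧ S x ∈ V ∧
      S x = x.1 + P (B (N (S x)) (c x.2)) ∧
      ∀ η w, η = P (B (N (S x)) (c w) + B (fderiv ℝ N (S x) η) (c x.2)) →
        fderiv ℝ S x (0, w) = η) ∧ ∀ᶠ p in 𝓝 γ₀, S (p, 0) = p := by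
  set G : E × H → E × H := fun x => (x.1 - P (B (N x.1) (c x.2)), x.2) with hG
  have hGs : ContDiff ℝ ∞ G :=
    (contDiff_fst.sub (P.contDiff.comp ((B.contDiff.comp (hN.comp contDiff_fst)).clm_apply
      (c.contDiff.comp contDiff_snd)))).prodMk contDiff_snd
  have hNd : ∀ γ, HasFDerivAt N (fderiv ℝ N γ) γ := fun γ =>
    (hN.differentiable (by simp) γ).hasFDerivAt
  have hGd := fun x : E × H => hasFDerivAt_sub_bilinear (hNd x.1) P B c x.2
  set M : H →L[ℝ] E := P.comp ((B (N γ₀)).comp c) with hM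
  let e' : (E × H) ≃L[ℝ] (E × H) := ContinuousLinearEquiv.equivOfInverse
    ((ContinuousLinearMap.fst ℝ E H - M.comp (ContinuousLinearMap.snd ℝ E H)).prod
      (ContinuousLinearMap.snd ℝ E H))
    ((ContinuousLinearMap.fst ℝ E H + M.comp (ContinuousLinearMap.snd ℝ E H)).prod
      (ContinuousLinearMap.snd ℝ E H)) (fun x => by simp) (fun x => by simp)
  have he' : HasFDerivAt G (e' : (E × H) →L[ℝ] (E × H)) (γ₀, 0) := by
    refine (hGd (γ₀, 0)).congr_fderiv ?_
    refine ContinuousLinearMap.ext fun x => ?_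
    simp [e', hM]
  obtain ⟨e, hx₀e, heV, heG, -, heS⟩ := exists_openPartialHomeomorph_contDiffAt
    (prod_mem_nhds hV univ_mem) (Eventually.of_forall fun x => hGs.contDiffAt) e' he'
  have hG0 : ∀ p, G (p, 0) = (p, 0) := fun p => by simp [hG]
  have htgt : ∀ᶠ x in 𝓝 (γ₀, (0 : H)), x ∈ e.target := by
    refine e.open_target.mem_nhds ?_
    rw [← hG0, ← heG]
    exact e.map_source hx₀e
  refine ⟨fun x => (e.symm x).1, ?_, ?_⟩
  · filter_upwards [htgt] with x hx
    have hS := heS _ hx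
    have hSd : HasFDerivAt e.symm (fderiv ℝ e.symm x) x :=
      (hS.differentiableAt (by simp)).hasFDerivAt
    set y := e.symm x with hy
    have hys : y ∈ e.source := e.map_target hx
    have hGy : G y = x := by rw [← heG]; exact e.right_inv hx
    have hy2 : y.2 = x.2 := (congrArg Prod.snd hGy : (G y).2 = x.2)
    have hy1 : y.1 - P (B (N y.1) (c y.2)) = x.1 :=
      (congrArg Prod.fst hGy : (G y).1 = x.1)
    refine ⟨contDiffAt_fst.comp x hS, (heV hys).1, ?_, fun η w hη => ?_⟩
    · rw [← hy2]
      exact sub_eq_iff_eq_add.1 hy1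
    · rw [← hy2] at hη
      have hSd1 : HasFDerivAt (fun x => (e.symm x).1)
          ((ContinuousLinearMap.fst ℝ E H).comp (fderiv ℝ e.symm x)) x :=
        hasFDerivAt_fst.comp x hSd
      rw [hSd1.fderiv]
      have hinv : HasFDerivAt (fun x => e.symm (G x)) (ContinuousLinearMap.id ℝ _) y := by
        refine (hasFDerivAt_id y).congr_of_eventuallyEq ?_
        filter_upwards [e.open_source.mem_nhds hys] with x hx
        rw [← heG]
        exact e.left_inv hx
      have hSd' : HasFDerivAt e.symm (fderiv ℝ e.symm x) (G y) := by rwa [hGy]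
      have hinv' := HasFDerivAt.unique (HasFDerivAt.comp y hSd' (hGd y)) hinv
      have hval := congrArg (fun L => L (η, w)) hinv'
      simp only [ContinuousLinearMap.comp_apply, ContinuousLinearMap.id_apply] at hval
      have hGw : ((ContinuousLinearMap.fst ℝ E H - P.comp
        ((B (N y.1)).comp (c.comp (ContinuousLinearMap.snd ℝ E H)) +
          (B.comp ((fderiv ℝ N y.1).comp (ContinuousLinearMap.fst ℝ E H))).flip (c y.2))).prod
        (ContinuousLinearMap.snd ℝ E H)) (η, w) = ((0 : E), w) :=
        Prod.ext (sub_eq_zero.2 hη) rfl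
      rw [hGw] at hval
      simp [hval]
  · have h1 : ∀ᶠ p in 𝓝 γ₀, ((p, 0) : E × H) ∈ e.source :=
      (continuous_id.prodMk continuous_const).continuousAt.preimage_mem_nhds
        (e.open_source.mem_nhds hx₀e)
    filter_upwards [h1] with p hp
    have := e.left_inv hp
    rw [heG, hG0] at this
    rw [this]

/-- The flow of a family of commuting vector fields `Y(·) h`, as a smooth map. -/
theorem exists_contDiffAt_fderiv_eq_of_commute {Y : E → H →L[ℝ] E} (hY : ContDiff ℝ ∞ Y)
    [CompleteSpace H] {z₀ : E}
    (hcomm : ∀ᶠ z in 𝓝 z₀, ∀ v w, fderiv ℝ Y z (Y z v) w = fderiv ℝ Y z (Y z w) v) :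
    ∃ Γ : E × H → E,
      (∀ᶠ x in 𝓝 (z₀, (0 : H)), ContDiffAt ℝ ∞ Γ x ∧ ∀ w, fderiv ℝ Γ x (0, w) = Y (Γ x) w) ∧
      ∀ᶠ p in 𝓝 z₀, Γ (p, 0) = p := by
  have hYd : Differentiable ℝ Y := hY.differentiable (by simp)
  have hY' : Continuous (fderiv ℝ Y) := hY.continuous_fderiv (by simp)
  obtain ⟨O, hO, hOo, hzO⟩ := eventually_nhds_iff.1 hcomm
  have hV : {γ : C(I, E) | ∀ s, γ s ∈ O} ∈ 𝓝 (constL I E z₀) := by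
    have h1 : IsOpen {γ : C(I, E) | MapsTo γ univ O} :=
      ContinuousMap.isOpen_setOfPred_mapsTo isCompact_univ hOo
    exact mem_of_superset (h1.mem_nhds fun s _ => by simpa using hzO)
      fun γ hγ s => hγ (mem_univ s)
  obtain ⟨S, hS, hS0⟩ := exists_contDiffAt_fixedPoint (contDiff_comp (K := I) hY) (primitiveL E)
    (applyL I H E) (constL I H) hV
  set j : E × H →L[ℝ] C(I, E) × H :=
    ((constL I E).comp (ContinuousLinearMap.fst ℝ E H)).prod (ContinuousLinearMap.snd ℝ E H) with hj
  set ev : C(I, E) →L[ℝ] E := ContinuousMap.evalCLM ℝ (1 : I) with hev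
  refine ⟨fun x => ev (S (j x)), ?_, ?_⟩
  · have hj0 : Tendsto j (𝓝 (z₀, 0)) (𝓝 (constL I E z₀, 0)) := j.continuous.tendsto' _ _ rfl
    filter_upwards [hj0.eventually hS] with x hx
    obtain ⟨hSx, hSO, hfix, hder⟩ := hx
    set γ := S (j x) with hγ
    refine ⟨ev.contDiff.contDiffAt.comp x (hSx.comp x j.contDiff.contDiffAt), fun w => ?_⟩
    have hΓd : HasFDerivAt (fun x => ev (S (j x))) (ev.comp ((fderiv ℝ S (j x)).comp j)) x :=
      ev.hasFDerivAt.comp x (((hSx.differentiableAt (by simp)).hasFDerivAt).comp x j.hasFDerivAt)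
    have hjw : j (0, w) = (0, w) := by simp [hj]
    rw [hΓd.fderiv, ContinuousLinearMap.comp_apply, ContinuousLinearMap.comp_apply, hjw]
    set η : C(I, E) := ⟨fun s => (s : ℝ) • Y (γ s) w, by
      have := hY.continuous
      fun_prop⟩ with hη
    have hγ' : ∀ s : I, γ s = x.1 + ∫ r in (0 : ℝ)..s, Y (γ (projIcc 0 1 zero_le_one r)) x.2 :=
      fun s => congrArg (fun c : C(I, E) => c s) hfix
    rw [hder η w]
    · simp [hev, hη]
    · rw [(hasFDerivAt_comp hYd hY' γ).fderiv]
      ext s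
      have := smul_eq_primitiveL_of_commute hY (w := w) hγ' (fun s => hO _ (hSO s) x.2 w) s
      rw [primitiveL_apply]
      refine this.trans (intervalIntegral.integral_congr fun r _ => ?_)
      exact add_comm _ _
  · filter_upwards [(constL I E).continuous.continuousAt.eventually hS0] with p hp
    have hjp : j (p, 0) = (constL I E p, 0) := rfl
    rw [hjp, hp]
    simp [hev]

end Exponential

section Frobenius

theorem fderiv_clm_apply_const {E F H : Type*} [NormedAddCommGroup E] [NormedSpace ℝ E]
    [NormedAddCommGroup F] [NormedSpace ℝ F]
    [NormedAddCommGroup H] [NormedSpace ℝ H] {f : E → H →L[ℝ] F} {z : E}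
    (hf : DifferentiableAt ℝ f z) (v : H) (δ : E) :
    fderiv ℝ (fun z => f z v) z δ = fderiv ℝ f z δ v := by
  rw [fderiv_clm_apply hf (differentiableAt_const v)]
  simp

variable {E : Type u} [NormedAddCommGroup E] [NormedSpace ℝ E] [FiniteDimensional ℝ E]

theorem exists_contDiff_eventuallyEq {F : Type*} [NormedAddCommGroup F] [NormedSpace ℝ F]
    {f : E → F} {a : E} (hf : ∀ᶠ x in 𝓝 a, ContDiffAt ℝ ∞ f x) :
    ∃ g : E → F, ContDiff ℝ ∞ g ∧ g =ᶠ[𝓝 a] f := by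
  obtain ⟨r, hr, hball⟩ := Metric.eventually_nhds_iff_ball.1 hf
  let b : ContDiffBump a := ⟨r / 4, r / 2, by positivity, by linarith⟩
  refine ⟨fun x => b x • f x, contDiff_iff_contDiffAt.2 fun x => ?_, ?_⟩
  · by_cases hx : x ∈ tsupport b
    · rw [b.tsupport_eq] at hx
      refine b.contDiff.contDiffAt.smul (hball x ?_)
      exact Metric.closedBall_subset_ball (by change r / 2 < r; linarith) hx
    · refine (contDiffAt_const (c := (0 : F))).congr_of_eventuallyEq ?_
      filter_upwards [notMem_tsupport_iff_eventuallyEq.1 hx] with y hy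
      simp [hy]
  · filter_upwards [b.eventuallyEq_one] with x hx
    simp [hx]

/-- Commuting vector fields have a full set of common first integrals. -/
theorem exists_firstIntegrals_of_commute {H : Type u} [NormedAddCommGroup H] [NormedSpace ℝ H]
    [FiniteDimensional ℝ H] {Y : E → H →L[ℝ] E} {z₀ : E}
    (hY : ∀ᶠ z in 𝓝 z₀, ContDiffAt ℝ ∞ Y z)
    (hcomm : ∀ᶠ z in 𝓝 z₀, ∀ v w, fderiv ℝ Y z (Y z v) w = fderiv ℝ Y z (Y z w) v)
    (ρ : E →L[ℝ] H) (hρ : ∀ w, ρ (Y z₀ w) = w) :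
    ∃ t : E → LinearMap.ker (ρ : E →ₗ[ℝ] H),
      (∀ᶠ z in 𝓝 z₀, ContDiffAt ℝ ∞ t z ∧ ∀ w, fderiv ℝ t z (Y z w) = 0) ∧
      ∀ δ, fderiv ℝ t z₀ δ = 0 → ∃ w, Y z₀ w = δ := by
  have := FiniteDimensional.complete ℝ E
  have := FiniteDimensional.complete ℝ H
  obtain ⟨g, hg, hgY⟩ := exists_contDiff_eventuallyEq hY
  have hgcomm : ∀ᶠ z in 𝓝 z₀, ∀ v w, fderiv ℝ g z (g z v) w = fderiv ℝ g z (g z w) v := by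
    filter_upwards [hcomm, eventually_eventually_nhds.2 hgY] with z hz hgz v w
    have h1 : g =ᶠ[𝓝 z] Y := hgz
    rw [h1.fderiv_eq, h1.eq_of_nhds, hz]
  obtain ⟨Γ, hΓ, hΓ0⟩ := exists_contDiffAt_fderiv_eq_of_commute hg hgcomm
  set K := LinearMap.ker (ρ : E →ₗ[ℝ] H) with hK
  set Y₀ := Y z₀ with hY₀
  have hΓz : Γ (z₀, 0) = z₀ := hΓ0.self_of_nhds
  let proj : E →L[ℝ] K := (ContinuousLinearMap.id ℝ E - Y₀.comp ρ).codRestrict K fun z => by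
    simp [hK, hρ]
  let e' : (K × H) ≃L[ℝ] E := ContinuousLinearEquiv.equivOfInverse
    (K.subtypeL.comp (ContinuousLinearMap.fst ℝ K H) + Y₀.comp (ContinuousLinearMap.snd ℝ K H))
    (proj.prod ρ)
    (fun x => by
      have hx : ρ (x.1 : E) = 0 := x.1.2
      refine Prod.ext (Subtype.ext ?_) ?_ <;> simp [proj, hρ, hx])
    (fun z => by simp [proj])
  set i : K × H →L[ℝ] E × H :=
    (K.subtypeL.comp (ContinuousLinearMap.fst ℝ K H)).prod (ContinuousLinearMap.snd ℝ K H) with hi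
  set τ : K × H → E × H := fun x => (z₀, 0) + i x with hτ
  have hτs : ContDiff ℝ ∞ τ := contDiff_const.add i.contDiff
  have hτd : ∀ x, HasFDerivAt τ i x := fun x => i.hasFDerivAt.const_add _
  have hτ0 : τ 0 = (z₀, 0) := by simp [hτ]
  have hτt : Tendsto τ (𝓝 0) (𝓝 (z₀, 0)) := hτs.continuous.tendsto' _ _ hτ0
  have hΦ := hτt.eventually hΓ
  have hΦs : ∀ᶠ x in 𝓝 (0 : K × H), ContDiffAt ℝ ∞ (fun x => Γ (τ x)) x := by
    filter_upwards [hΦ] with x hx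
    exact hx.1.comp x hτs.contDiffAt
  have hΦd : ∀ x, ContDiffAt ℝ ∞ Γ (τ x) →
      HasFDerivAt (fun x => Γ (τ x)) ((fderiv ℝ Γ (τ x)).comp i) x := fun x hx =>
    ((hx.differentiableAt (by simp)).hasFDerivAt).comp x (hτd x)
  have hΓz₀ := hΓ.self_of_nhds
  have hhor : ∀ k : E, fderiv ℝ Γ (z₀, 0) (k, 0) = k := by
    intro k
    have h1 : HasFDerivAt (fun p : E => Γ (p, 0))
        ((fderiv ℝ Γ (z₀, 0)).comp (ContinuousLinearMap.inl ℝ E H)) z₀ :=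
      ((hΓz₀.1.differentiableAt (by simp)).hasFDerivAt).comp z₀ (hasFDerivAt_prodMk_left z₀ 0)
    have h2 : HasFDerivAt (fun p : E => Γ (p, 0)) (ContinuousLinearMap.id ℝ E) z₀ :=
      (hasFDerivAt_id z₀).congr_of_eventuallyEq hΓ0
    simpa using congrArg (fun L => L k) (h1.unique h2)
  have he' : HasFDerivAt (fun x => Γ (τ x)) (e' : (K × H) →L[ℝ] E) 0 := by
    refine (hΦd 0 (by rw [hτ0]; exact hΓz₀.1)).congr_fderiv ?_
    refine ContinuousLinearMap.ext fun x => ?_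
    have hsplit : i x = ((x.1 : E), 0) + (0, x.2) := by simp [hi]
    rw [ContinuousLinearMap.comp_apply, hsplit, map_add, hτ0, hhor, hΓz₀.2, hΓz,
      hgY.eq_of_nhds]
    simp [e', hY₀]
  obtain ⟨e, h0e, heV, heΦ, -, heS⟩ := exists_openPartialHomeomorph_contDiffAt hΦ hΦs e' he'
  have hz₀ : z₀ ∈ e.target := by
    have := e.map_source h0e
    simpa only [heΦ, hτ0, hΓz] using this
  have hsymm : ∀ z ∈ e.target, g z = Y z → ∀ w, fderiv ℝ e.symm z (Y z w) = (0, w) := by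
    intro z hz hgz w
    set x := e.symm z with hx
    have hxs : x ∈ e.source := e.map_target hz
    have hxz : Γ (τ x) = z := by
      have := e.right_inv hz
      rwa [heΦ] at this
    have hgood := heV hxs
    have hθ : HasFDerivAt e.symm (fderiv ℝ e.symm z) (Γ (τ x)) := by
      rw [hxz]
      exact ((heS z hz).differentiableAt (by simp)).hasFDerivAt
    have hinv : HasFDerivAt (fun x => e.symm (Γ (τ x))) (ContinuousLinearMap.id ℝ _) x := by
      refine (hasFDerivAt_id x).congr_of_eventuallyEq ?_
      filter_upwards [e.open_source.mem_nhds hxs] with x hx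
      have := e.left_inv hx
      rwa [heΦ] at this
    have h1 := congrArg (fun L => L (0, w))
      ((HasFDerivAt.comp x hθ (hΦd x hgood.1)).unique hinv)
    have hiw : i (0, w) = (0, w) := by simp [hi]
    simpa [hiw, hgood.2, hxz, hgz] using h1
  have htd : ∀ z ∈ e.target, HasFDerivAt (fun z => (e.symm z).1)
      ((ContinuousLinearMap.fst ℝ K H).comp (fderiv ℝ e.symm z)) z := fun z hz =>
    hasFDerivAt_fst.comp z ((heS z hz).differentiableAt (by simp)).hasFDerivAt
  refine ⟨fun z => (e.symm z).1, ?_, fun δ hδ => ?_⟩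
  · filter_upwards [e.open_target.mem_nhds hz₀, hgY] with z hz hgz
    refine ⟨contDiffAt_fst.comp z (heS z hz), fun w => ?_⟩
    rw [(htd z hz).fderiv, ContinuousLinearMap.comp_apply, hsymm z hz hgz]
    rfl
  · rw [(htd z₀ hz₀).fderiv] at hδ
    set w := (fderiv ℝ e.symm z₀ δ).2 with hw
    refine ⟨w, ?_⟩
    have h1 : fderiv ℝ e.symm z₀ (Y z₀ w) = fderiv ℝ e.symm z₀ δ := by
      rw [hsymm z₀ hz₀ hgY.eq_of_nhds]
      exact Prod.ext hδ.symm rfl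
    have hΦ0 : HasFDerivAt (fun x => Γ (τ x)) (e' : (K × H) →L[ℝ] E) (e.symm z₀) := by
      have : e.symm z₀ = 0 := by
        have := e.left_inv h0e
        simpa only [heΦ, hτ0, hΓz] using this
      rwa [this]
    have hright : HasFDerivAt (fun z => Γ (τ (e.symm z))) (ContinuousLinearMap.id ℝ E) z₀ := by
      refine (hasFDerivAt_id z₀).congr_of_eventuallyEq ?_
      filter_upwards [e.open_target.mem_nhds hz₀] with z hz
      have := e.right_inv hz
      rwa [heΦ] at this
    have hcomp := (HasFDerivAt.comp z₀ hΦ0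
      ((heS z₀ hz₀).differentiableAt (by simp)).hasFDerivAt).unique hright
    have hL : ∀ v, e' (fderiv ℝ e.symm z₀ v) = v := fun v => congrArg (fun L => L v) hcomp
    rw [← hL (Y₀ w), h1, hL]

/-- **Frobenius theorem**: an involutive distribution spanned by smooth vector fields which are
linearly independent at a point has, near that point, a full set of smooth first integrals. -/
theorem exists_firstIntegrals_of_involutive {ι : Type u} [Fintype ι] {d : ℕ}
    (hd : d + Fintype.card ι = Module.finrank ℝ E) {X : ι → E → E} {z₀ : E}
    (hX : ∀ᶠ z in 𝓝 z₀, ∀ i, ContDiffAt ℝ ∞ (X i) z)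
    (hli : LinearIndependent ℝ fun i => X i z₀)
    (hinv : ∀ᶠ z in 𝓝 z₀, ∀ i j,
      lieB (X i) (X j) z ∈ Submodule.span ℝ (range fun i => X i z)) :
    ∃ t : E → Fin d → ℝ,
      (∀ᶠ z in 𝓝 z₀, ContDiffAt ℝ ∞ t z ∧ ∀ i, fderiv ℝ t z (X i z) = 0) ∧
      ∀ δ, fderiv ℝ t z₀ δ = 0 → δ ∈ Submodule.span ℝ (range fun i => X i z₀) := by
  classical
  set T : E → (ι → ℝ) →L[ℝ] E := fun z =>
    ∑ i, (ContinuousLinearMap.proj (R := ℝ) (φ := fun _ : ι => ℝ) i).smulRight (X i z) with hT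
  have hTa : ∀ z a, T z a = ∑ i, a i • X i z := fun z a => by
    simp [hT, sum_apply]
  have hTspan : ∀ z δ, δ ∈ Submodule.span ℝ (range fun i => X i z) ↔ ∃ a, T z a = δ := by
    intro z δ
    rw [Submodule.mem_span_range_iff_exists_fun]
    simp only [hTa]
  have hTs : ∀ z, (∀ i, ContDiffAt ℝ ∞ (X i) z) → ContDiffAt ℝ ∞ T z := fun z hz =>
    ContDiffAt.sum fun i _ => contDiffAt_const.smulRight (hz i)
  have hTker : LinearMap.ker (T z₀ : (ι → ℝ) →ₗ[ℝ] E) = ⊥ := by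
    refine LinearMap.ker_eq_bot'.2 fun a ha => funext fun i => ?_
    exact Fintype.linearIndependent_iff.1 hli a (by rw [← hTa]; exact ha) i
  obtain ⟨ρ₀, hρ₀⟩ := LinearMap.exists_leftInverse_of_injective _ hTker
  set ρ : E →L[ℝ] (ι → ℝ) := LinearMap.toContinuousLinearMap ρ₀ with hρdef
  have hρ : ∀ a, ρ (T z₀ a) = a := fun a => congrArg (fun L => L a) hρ₀
  set N : E → (ι → ℝ) →L[ℝ] (ι → ℝ) := fun z => ρ.comp (T z) with hN
  have hN₀ : N z₀ = (ContinuousLinearEquiv.refl ℝ (ι → ℝ) : (ι → ℝ) →L[ℝ] (ι → ℝ)) :=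
    ContinuousLinearMap.ext fun a => hρ a
  have hNs : ∀ z, (∀ i, ContDiffAt ℝ ∞ (X i) z) → ContDiffAt ℝ ∞ N z := fun z hz =>
    contDiffAt_const.clm_comp (hTs z hz)
  have hNinv : ∀ᶠ z in 𝓝 z₀, N z ∈ range ((↑) : ((ι → ℝ) ≃L[ℝ] (ι → ℝ)) → _) := by
    refine (hNs z₀ hX.self_of_nhds).continuousAt ?_
    rw [hN₀]
    exact ContinuousLinearEquiv.nhds _
  set R : E → (ι → ℝ) →L[ℝ] (ι → ℝ) := fun z => (N z).inverse with hR
  set Y : E → (ι → ℝ) →L[ℝ] E := fun z => (T z).comp (R z) with hY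
  have hRs : ∀ z, (∀ i, ContDiffAt ℝ ∞ (X i) z) →
      N z ∈ range ((↑) : ((ι → ℝ) ≃L[ℝ] (ι → ℝ)) → _) → ContDiffAt ℝ ∞ R z := by
    rintro z hz ⟨f, hf⟩
    exact ContDiffAt.comp z (by rw [← hf]; exact contDiffAt_map_inverse f) (hNs z hz)
  have hNR : ∀ z, N z ∈ range ((↑) : ((ι → ℝ) ≃L[ℝ] (ι → ℝ)) → _) →
      ∀ v, ρ (Y z v) = v := by
    rintro z ⟨f, hf⟩ v
    change N z ((N z).inverse v) = v
    rw [← hf, ContinuousLinearMap.inverse_equiv]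
    simp
  have hYs : ∀ᶠ z in 𝓝 z₀, ContDiffAt ℝ ∞ Y z := by
    filter_upwards [hX, hNinv] with z hz hz'
    exact (hTs z hz).clm_comp (hRs z hz hz')
  have hY₀ : ∀ w, Y z₀ w = T z₀ w := fun w => by
    simp only [hY, hR, ContinuousLinearMap.comp_apply]
    rw [hN₀, ContinuousLinearMap.inverse_equiv]
    rfl
  have hcomm : ∀ᶠ z in 𝓝 z₀, ∀ v w, fderiv ℝ Y z (Y z v) w = fderiv ℝ Y z (Y z w) v := by
    filter_upwards [hX, hYs, eventually_eventually_nhds.2 hNinv, hinv] with z hz hYz hNz hz' v w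
    have hTd : DifferentiableAt ℝ T z := (hTs z hz).differentiableAt (by simp)
    have hRd : DifferentiableAt ℝ R z :=
      (hRs z hz hNz.self_of_nhds).differentiableAt (by simp)
    have hYd : DifferentiableAt ℝ Y z := hYz.differentiableAt (by simp)
    have hTd' : ∀ δ a, fderiv ℝ T z δ a = ∑ i, a i • fderiv ℝ (X i) z δ := by
      intro δ a
      rw [← fderiv_clm_apply_const hTd]
      simp only [hTa]
      have h1 : HasFDerivAt (fun z => ∑ i, a i • X i z) (∑ i, a i • fderiv ℝ (X i) z) z :=
        HasFDerivAt.fun_sum fun i _ =>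
          ((hz i).differentiableAt (by simp)).hasFDerivAt.fun_const_smul (a i)
      rw [h1.fderiv]
      simp [sum_apply]
    have hleib : ∀ δ w, fderiv ℝ Y z δ w =
        fderiv ℝ T z δ (R z w) + T z (fderiv ℝ R z δ w) := by
      intro δ w
      simp only [hY]
      rw [fderiv_clm_comp hTd hRd]
      simp [add_comm]
    have hker : ∀ δ w, ρ (fderiv ℝ Y z δ w) = 0 := by
      intro δ w
      have h1 : (fun z => ρ (Y z w)) =ᶠ[𝓝 z] fun _ => w := by
        filter_upwards [hNz] with z' hz'
        exact hNR z' hz' w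
      have h2 : HasFDerivAt (fun z => ρ (Y z w)) (ρ.comp (fderiv ℝ (fun z => Y z w) z)) z :=
        ρ.hasFDerivAt.comp z (hYd.clm_apply (differentiableAt_const w)).hasFDerivAt
      have h3 := h2.unique ((hasFDerivAt_const w z).congr_of_eventuallyEq h1)
      have h4 := congrArg (fun L => L δ) h3
      simpa [fderiv_clm_apply_const hYd] using h4
    have hbr : fderiv ℝ T z (T z (R z v)) (R z w) - fderiv ℝ T z (T z (R z w)) (R z v) ∈
        Submodule.span ℝ (range fun i => X i z) := by
      have h1 : fderiv ℝ T z (T z (R z v)) (R z w) - fderiv ℝ T z (T z (R z w)) (R z v) =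
          ∑ i, ∑ j, (R z v i * R z w j) • lieB (X i) (X j) z := by
        rw [hTd', hTd']
        simp only [hTa, map_sum, map_smul, Finset.smul_sum, smul_smul, lieB, smul_sub,
          Finset.sum_sub_distrib]
        congr 1
        rw [Finset.sum_comm]
        simp only [mul_comm]
      rw [h1]
      exact Submodule.sum_mem _ fun i _ => Submodule.sum_mem _ fun j _ =>
        Submodule.smul_mem _ _ (hz' i j)
    obtain ⟨a, ha⟩ := (hTspan _ _).1 hbr
    rw [← sub_eq_zero]
    set b := a + fderiv ℝ R z (Y z v) w - fderiv ℝ R z (Y z w) v with hb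
    have hdb : fderiv ℝ Y z (Y z v) w - fderiv ℝ Y z (Y z w) v = T z b := by
      rw [hleib, hleib, hb, map_sub, map_add, ha]
      simp only [hY, ContinuousLinearMap.comp_apply]
      abel
    have hNb : N z b = 0 := by
      change ρ (T z b) = 0
      rw [← hdb, map_sub, hker, hker, sub_zero]
    obtain ⟨f, hf⟩ := hNz.self_of_nhds
    have hb0 : b = 0 := f.injective (by
      rw [map_zero, ← hNb, ← hf]
      rfl)
    rw [hdb, hb0, map_zero]
  obtain ⟨t, ht, htker⟩ := exists_firstIntegrals_of_commute hYs hcomm ρ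
    fun w => by rw [hY₀]; exact hρ w
  have hsurj : LinearMap.range (ρ : E →ₗ[ℝ] (ι → ℝ)) = ⊤ :=
    LinearMap.range_eq_top.2 fun a => ⟨T z₀ a, hρ a⟩
  have hdim : Module.finrank ℝ (LinearMap.ker (ρ : E →ₗ[ℝ] (ι → ℝ))) =
      Module.finrank ℝ (Fin d → ℝ) := by
    have h1 := LinearMap.finrank_range_add_finrank_ker (ρ : E →ₗ[ℝ] (ι → ℝ))
    rw [hsurj, finrank_top, Module.finrank_fintype_fun_eq_card, ← hd] at h1
    rw [Module.finrank_fin_fun]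
    omega
  let c := ContinuousLinearEquiv.ofFinrankEq hdim
  have hcd : ∀ z, ContDiffAt ℝ ∞ t z →
      ∀ δ, fderiv ℝ (fun z => c (t z)) z δ = c (fderiv ℝ t z δ) := by
    intro z hz δ
    have h1 : HasFDerivAt (fun z => c (t z)) ((c : _ →L[ℝ] (Fin d → ℝ)).comp (fderiv ℝ t z)) z :=
      c.hasFDerivAt.comp z (hz.differentiableAt (by simp)).hasFDerivAt
    rw [h1.fderiv]
    rfl
  refine ⟨fun z => c (t z), ?_, fun δ hδ => ?_⟩
  · filter_upwards [ht, hNinv] with z hz hNz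
    refine ⟨c.contDiff.contDiffAt.comp z hz.1, fun i => ?_⟩
    obtain ⟨f, hf⟩ := hNz
    have hi : X i z = Y z (N z (Pi.single i 1)) := by
      simp only [hY, hR, ContinuousLinearMap.comp_apply]
      rw [← hf, ContinuousLinearMap.inverse_equiv]
      simp [hTa, Pi.single_apply]
    rw [hcd z hz.1, hi, hz.2, map_zero]
  · rw [hcd z₀ ht.self_of_nhds.1, map_eq_zero_iff c c.injective] at hδ
    obtain ⟨w, hw⟩ := htker δ hδ
    exact (hTspan _ _).2 ⟨w, by rw [← hY₀, hw]⟩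

end Frobenius

section Coordinates

/-- Vector fields which an immersion maps to constant vectors commute. -/
theorem lieB_eq_zero_of_fderiv_apply_eventuallyEq_const {E F : Type*} [NormedAddCommGroup E]
    [NormedSpace ℝ E] [NormedAddCommGroup F] [NormedSpace ℝ F] {φ : E → F} {X Y : E → E} {z : E}
    {a b : F} (hφ : ContDiffAt ℝ ∞ φ z) (hX : DifferentiableAt ℝ X z)
    (hY : DifferentiableAt ℝ Y z) (hinj : Function.Injective (fderiv ℝ φ z))
    (hφX : (fun w => fderiv ℝ φ w (X w)) =ᶠ[𝓝 z] fun _ => a)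
    (hφY : (fun w => fderiv ℝ φ w (Y w)) =ᶠ[𝓝 z] fun _ => b) : lieB X Y z = 0 := by
  have hd : DifferentiableAt ℝ (fderiv ℝ φ) z :=
    (hφ.fderiv_right (m := ∞) (by simp)).differentiableAt (by simp)
  have key : ∀ {Z : E → E} {c : F}, DifferentiableAt ℝ Z z →
      ((fun w => fderiv ℝ φ w (Z w)) =ᶠ[𝓝 z] fun _ => c) → ∀ δ,
      fderiv ℝ φ z (fderiv ℝ Z z δ) = -fderiv ℝ (fderiv ℝ φ) z δ (Z z) := by
    intro Z c hZ hc δ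
    have h1 := congrArg (fun L => L δ) ((hd.hasFDerivAt.clm_apply hZ.hasFDerivAt).unique
      ((hasFDerivAt_const c z).congr_of_eventuallyEq hc))
    exact eq_neg_of_add_eq_zero_left (by simpa using h1)
  have hsymm : IsSymmSndFDerivAt ℝ φ z := hφ.isSymmSndFDerivAt (by
    rw [minSmoothness_of_isRCLikeNormedField]
    exact WithTop.coe_le_coe.2 (le_top : (2 : ℕ∞) ≤ ⊤))
  refine hinj ?_
  rw [lieB, map_sub, key hY hφY, key hX hφX, hsymm (X z) (Y z), sub_self, map_zero]

theorem injective_fderiv_of_leftInverse {E F : Type*} [NormedAddCommGroup E]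
    [NormedSpace ℝ E] [NormedAddCommGroup F] [NormedSpace ℝ F] {φ : E → F} {ψ : F → E} {z : E}
    (hφ : DifferentiableAt ℝ φ z) (hψ : DifferentiableAt ℝ ψ (φ z))
    (h : ∀ᶠ w in 𝓝 z, ψ (φ w) = w) : Function.Injective (fderiv ℝ φ z) := by
  have h1 := (hψ.hasFDerivAt.comp z hφ.hasFDerivAt).unique
    ((hasFDerivAt_id z).congr_of_eventuallyEq h)
  exact Function.LeftInverse.injective (g := fderiv ℝ ψ (φ z)) fun δ => congrArg (fun L => L δ) h1

theorem sum_smul_eVec (p n : ℕ) (a : Fin n → ℝ) : ∑ k, a k • eVec p n k = (0, a) := by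
  refine Prod.ext ?_ ?_
  · simp [eVec, Prod.fst_sum]
  · simp only [eVec, Prod.snd_sum, Prod.smul_snd]
    exact (pi_eq_sum_univ' a).symm

end Coordinates

/- Here `m = q + 2n`, so `ℝ^{m−n} = ℝ^{q+n}` (first factor of the source) and
`ℝ^{m−2n} = ℝ^q` (first factor of the target `ℝ^{m−2n} × ℝ^n × ℝ^n`). -/
theorem stmt7 (q n : ℕ)
    (U : Set ((Fin (q + n) → ℝ) × (Fin n → ℝ))) (hU : IsOpen U)
    (F : ((Fin (q + n) → ℝ) × (Fin n → ℝ)) → (Fin (q + n) → ℝ) × (Fin n → ℝ))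
    (hF : ContDiffOn ℝ (⊤ : ℕ∞) F U)
    (W : Fin n → ((Fin (q + n) → ℝ) × (Fin n → ℝ)) → (Fin (q + n) → ℝ) × (Fin n → ℝ))
    (hW : ∀ i, W i = lieB F (fun _ => eVec (q + n) n i))
    (hli : ∀ z ∈ U, LinearIndependent ℝ
      (Sum.elim (fun i : Fin n => eVec (q + n) n i) (fun i : Fin n => W i z)))
    (hinv₁ : ∀ z ∈ U, ∀ i j, lieB (fun _ => eVec (q + n) n i) (W j) z ∈
      Submodule.span ℝ (Set.range (Sum.elim (fun k : Fin n => eVec (q + n) n k)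
        (fun k : Fin n => W k z))))
    (hinv₂ : ∀ z ∈ U, ∀ i j, lieB (W i) (W j) z ∈
      Submodule.span ℝ (Set.range (Sum.elim (fun k : Fin n => eVec (q + n) n k)
        (fun k : Fin n => W k z)))) :
    ∀ z₀ ∈ U, ∃ U' : Set ((Fin (q + n) → ℝ) × (Fin n → ℝ)), U' ⊆ U ∧ IsOpen U' ∧ z₀ ∈ U' ∧
      ∃ A : ((Fin (q + n) → ℝ) × (Fin n → ℝ)) → Fin n → Fin n → ℝ,
        ContDiffOn ℝ (⊤ : ℕ∞) A U' ∧
        (∀ z ∈ U', IsUnit (Matrix.of (A z))) ∧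
        (∀ i j, ∀ z ∈ U',
          lieB (fun w => ∑ k, A w i k • eVec (q + n) n k)
               (fun w => ∑ k, A w j k • eVec (q + n) n k) z = 0) ∧
      ∃ O : Set ((Fin q → ℝ) × (Fin n → ℝ) × (Fin n → ℝ)), IsOpen O ∧
      ∃ φ : ((Fin (q + n) → ℝ) × (Fin n → ℝ)) → (Fin q → ℝ) × (Fin n → ℝ) × (Fin n → ℝ),
      ∃ ψ : ((Fin q → ℝ) × (Fin n → ℝ) × (Fin n → ℝ)) → (Fin (q + n) → ℝ) × (Fin n → ℝ),
        ContDiffOn ℝ (⊤ : ℕ∞) φ U' ∧ ContDiffOn ℝ (⊤ : ℕ∞) ψ O ∧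
        φ '' U' = O ∧ (∀ z ∈ U', ψ (φ z) = z) ∧ (∀ w ∈ O, φ (ψ w) = w) ∧
        (∀ z ∈ U', ∀ i,
          fderiv ℝ φ z ((∑ k, A z i k • eVec (q + n) n k))
            = ((0, 0, Pi.single i 1) : (Fin q → ℝ) × (Fin n → ℝ) × (Fin n → ℝ))) ∧
        (∀ z ∈ U', ∀ i,
          (fderiv ℝ φ z (lieB F (fun w => ∑ k, A w i k • eVec (q + n) n k) z)
              + ((0, Pi.single i 1, 0) : (Fin q → ℝ) × (Fin n → ℝ) × (Fin n → ℝ))).1 = 0 ∧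
          (fderiv ℝ φ z (lieB F (fun w => ∑ k, A w i k • eVec (q + n) n k) z)
              + ((0, Pi.single i 1, 0) : (Fin q → ℝ) × (Fin n → ℝ) × (Fin n → ℝ))).2.1 = 0) := by
  intro z₀ hz₀
  have hFs : ∀ z ∈ U, ContDiffAt ℝ ∞ F z := fun z hz => hF.contDiffAt (hU.mem_nhds hz)
  have hFd : ∀ z ∈ U, DifferentiableAt ℝ F z := fun z hz => (hFs z hz).differentiableAt (by simp)
  have hDFs : ∀ z ∈ U, ContDiffAt ℝ ∞ (fderiv ℝ F) z := fun z hz =>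
    (hFs z hz).fderiv_right (by simp)
  have hWe : ∀ i z, W i z = -fderiv ℝ F z (eVec (q + n) n i) := fun i z => by
    simp [hW, lieB]
  have hWs : ∀ z ∈ U, ∀ i, ContDiffAt ℝ ∞ (W i) z := fun z hz i => by
    rw [show W i = fun z => -fderiv ℝ F z (eVec (q + n) n i) from funext (hWe i)]
    exact ((hDFs z hz).clm_apply contDiffAt_const).neg
  have hDF : ∀ z v, fderiv ℝ F z (0, v) = -∑ k, v k • W k z := by
    intro z v
    rw [← sum_smul_eVec, map_sum, ← Finset.sum_neg_distrib]
    exact Finset.sum_congr rfl fun k _ => by rw [map_smul, hWe, smul_neg, neg_neg]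
  -- first integrals of the distribution spanned by the `eVec i` and the `W i`
  set X : Fin n ⊕ Fin n → (Fin (q + n) → ℝ) × (Fin n → ℝ) → (Fin (q + n) → ℝ) × (Fin n → ℝ) :=
    Sum.elim (fun i _ => eVec (q + n) n i) W with hXdef
  have hX : ∀ z, (fun i => X i z) =
      Sum.elim (fun i : Fin n => eVec (q + n) n i) (fun i : Fin n => W i z) := fun z =>
    funext fun i => by cases i <;> rfl
  obtain ⟨t, ht, htker⟩ := exists_firstIntegrals_of_involutive (d := q) (X := X) (z₀ := z₀)
    (by simp; ring)
    (by
      filter_upwards [hU.mem_nhds hz₀] with z hz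
      rintro (i | i)
      · exact contDiffAt_const
      · exact hWs z hz i)
    (by rw [hX]; exact hli z₀ hz₀)
    (by
      filter_upwards [hU.mem_nhds hz₀] with z hz
      rw [hX]
      rintro (i | i) (j | j)
      · simp [hXdef, lieB]
      · exact hinv₁ z hz i j
      · have h1 : lieB (X (Sum.inr i)) (X (Sum.inl j)) z =
            -lieB (fun _ => eVec (q + n) n j) (W i) z := (neg_sub _ _).symm
        rw [h1]
        exact Submodule.neg_mem _ (hinv₁ z hz j i)
      · exact hinv₂ z hz i j)
  -- a linear projection dual to the `W i z₀`
  have hker : ∀ α β : Fin n → ℝ, (0, α) + ∑ k, β k • W k z₀ = 0 → α = 0 ∧ β = 0 := by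
    intro α β h
    have h1 := Fintype.linearIndependent_iff.1 (hli z₀ hz₀) (Sum.elim α β)
      (by simpa [Fintype.sum_sum_type, sum_smul_eVec] using h)
    exact ⟨funext fun i => h1 (Sum.inl i), funext fun i => h1 (Sum.inr i)⟩
  obtain ⟨π₀, hπ₀⟩ := LinearMap.exists_leftInverse_of_injective
    (Fintype.linearCombination ℝ fun k => (W k z₀).1) (LinearMap.ker_eq_bot'.2 fun β hβ => by
      rw [Fintype.linearCombination_apply] at hβ
      refine (hker (-(∑ k, β k • W k z₀).2) β (Prod.ext ?_ ?_)).2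
      · simpa [Prod.fst_sum] using hβ
      · simp)
  set π : (Fin (q + n) → ℝ) →L[ℝ] (Fin n → ℝ) := LinearMap.toContinuousLinearMap π₀
  have hπ : ∀ β : Fin n → ℝ, π (∑ k, β k • W k z₀).1 = β := by
    intro β
    have h1 := congrArg (fun L => L β) hπ₀
    simpa [Fintype.linearCombination_apply, Prod.fst_sum, π] using h1
  set M : (Fin (q + n) → ℝ) × (Fin n → ℝ) → (Fin n → ℝ) →L[ℝ] (Fin n → ℝ) := fun z =>
    (π.comp (ContinuousLinearMap.fst ℝ _ _)).comp
      ((fderiv ℝ F z).comp (ContinuousLinearMap.inr ℝ (Fin (q + n) → ℝ) (Fin n → ℝ))) with hM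
  have hMa : ∀ z v, M z v = π (fderiv ℝ F z (0, v)).1 := fun z v => rfl
  have hM₀ : M z₀ = (ContinuousLinearEquiv.neg ℝ : (Fin n → ℝ) ≃L[ℝ] (Fin n → ℝ)) :=
    ContinuousLinearMap.ext fun v => by
      rw [hMa, hDF, Prod.fst_neg, map_neg, hπ]
      rfl
  have hMs : ∀ z ∈ U, ContDiffAt ℝ ∞ M z := fun z hz =>
    contDiffAt_const.clm_comp ((hDFs z hz).clm_comp contDiffAt_const)
  have hMinv : ∀ᶠ z in 𝓝 z₀, M z ∈ range ((↑) : ((Fin n → ℝ) ≃L[ℝ] (Fin n → ℝ)) → _) := by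
    refine (hMs z₀ hz₀).continuousAt ?_
    rw [hM₀]
    exact ContinuousLinearEquiv.nhds _
  -- the coordinate map
  set φ : (Fin (q + n) → ℝ) × (Fin n → ℝ) → (Fin q → ℝ) × (Fin n → ℝ) × (Fin n → ℝ) := fun z =>
    (t z, π z.1, π (F z).1) with hφdef
  have hφs : ∀ z ∈ U, ContDiffAt ℝ ∞ t z → ContDiffAt ℝ ∞ φ z := fun z hz htz =>
    htz.prodMk ((π.contDiff.contDiffAt.comp z contDiffAt_fst).prodMk
      (π.contDiff.contDiffAt.comp z (contDiffAt_fst.comp z (hFs z hz))))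
  have hφd : ∀ z ∈ U, ContDiffAt ℝ ∞ t z → HasFDerivAt φ ((fderiv ℝ t z).prod
      ((π.comp (ContinuousLinearMap.fst ℝ _ _)).prod
        ((π.comp (ContinuousLinearMap.fst ℝ _ _)).comp (fderiv ℝ F z)))) z := fun z hz htz =>
    ((htz.differentiableAt (by simp)).hasFDerivAt).prodMk
      ((π.comp (ContinuousLinearMap.fst ℝ _ _)).hasFDerivAt.prodMk
        ((π.comp (ContinuousLinearMap.fst ℝ _ _)).hasFDerivAt.comp z (hFd z hz).hasFDerivAt))
  have hφa : ∀ z ∈ U, ContDiffAt ℝ ∞ t z → ∀ δ, fderiv ℝ φ z δ =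
      (fderiv ℝ t z δ, π δ.1, π (fderiv ℝ F z δ).1) := fun z hz htz δ => by
    rw [(hφd z hz htz).fderiv]
    rfl
  have ht₀ := ht.self_of_nhds
  have hinj₀ : Function.Injective (fderiv ℝ φ z₀) := by
    refine (injective_iff_map_eq_zero _).2 fun δ hδ => ?_
    rw [hφa z₀ hz₀ ht₀.1, Prod.mk_eq_zero, Prod.mk_eq_zero] at hδ
    obtain ⟨hδ₁, hδ₂, hδ₃⟩ := hδ
    have h1 := htker δ hδ₁
    obtain ⟨a, ha⟩ := Submodule.mem_span_range_iff_exists_fun ℝ |>.1 h1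
    have ha' : (0, fun k => a (Sum.inl k)) + ∑ k, a (Sum.inr k) • W k z₀ = δ := by
      rw [← ha, Fintype.sum_sum_type, ← sum_smul_eVec]
      rfl
    have hβ : (fun k => a (Sum.inr k)) = 0 := by
      rw [← hδ₂, ← ha', Prod.fst_add, zero_add]
      exact (hπ fun k => a (Sum.inr k)).symm
    have hδ' : δ = (0, fun k => a (Sum.inl k)) := by
      rw [← ha', add_eq_left]
      refine Finset.sum_eq_zero fun k _ => ?_
      rw [show a (Sum.inr k) = 0 from congrFun hβ k, zero_smul]
    rw [hδ', ← hMa, hM₀] at hδ₃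
    rw [hδ', show (fun k => a (Sum.inl k)) = 0 from neg_eq_zero.1 hδ₃]
    rfl
  let φ' : ((Fin (q + n) → ℝ) × (Fin n → ℝ)) ≃L[ℝ] ((Fin q → ℝ) × (Fin n → ℝ) × (Fin n → ℝ)) :=
    (LinearMap.linearEquivOfInjective (fderiv ℝ φ z₀ : _ →ₗ[ℝ] _) hinj₀
      (by simp; ring)).toContinuousLinearEquiv
  have hφ' : HasFDerivAt φ (φ' : _ →L[ℝ] _) z₀ :=
    ((hφs z₀ hz₀ ht₀.1).differentiableAt (by simp)).hasFDerivAt.congr_fderiv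
      (ContinuousLinearMap.ext fun _ => rfl)
  have hgood : ∀ᶠ z in 𝓝 z₀, z ∈ U ∧ (ContDiffAt ℝ ∞ t z ∧ ∀ i, fderiv ℝ t z (X i z) = 0) ∧
      M z ∈ range ((↑) : ((Fin n → ℝ) ≃L[ℝ] (Fin n → ℝ)) → _) := by
    filter_upwards [hU.mem_nhds hz₀, ht, hMinv] with z h1 h2 h3 using ⟨h1, h2, h3⟩
  obtain ⟨e, hze, heV, heφ, heφs, heS⟩ := exists_openPartialHomeomorph_contDiffAt hgood
    (hgood.mono fun z hz => hφs z hz.1 hz.2.1.1) φ' hφ'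
  set R : (Fin (q + n) → ℝ) × (Fin n → ℝ) → (Fin n → ℝ) →L[ℝ] (Fin n → ℝ) := fun z =>
    (M z).inverse with hR
  have hRs : ∀ z ∈ e.source, ContDiffAt ℝ ∞ R z := by
    intro z hz
    obtain ⟨hzU, -, f, hf⟩ := heV hz
    exact ContDiffAt.comp z (by rw [← hf]; exact contDiffAt_map_inverse f) (hMs z hzU)
  have hMR : ∀ z ∈ e.source, ∀ v, M z (R z v) = v := by
    intro z hz v
    obtain ⟨-, -, f, hf⟩ := heV hz
    change M z ((M z).inverse v) = v
    rw [← hf, ContinuousLinearMap.inverse_equiv]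
    simp
  have hRvs : ∀ z ∈ e.source, ∀ v, ContDiffAt ℝ ∞ (fun w => R w v) z := fun z hz v =>
    (hRs z hz).clm_apply contDiffAt_const
  have hVd : ∀ z ∈ e.source, ∀ v, HasFDerivAt
      (fun w => ((0, R w v) : (Fin (q + n) → ℝ) × (Fin n → ℝ)))
      ((0 : _ →L[ℝ] (Fin (q + n) → ℝ)).prod (fderiv ℝ (fun w => R w v) z)) z := fun z hz v =>
    (hasFDerivAt_const _ z).prodMk ((hRvs z hz v).differentiableAt (by simp)).hasFDerivAt
  have hvert : ∀ z ∈ e.source, ∀ v, fderiv ℝ φ z (0, v) = (0, 0, M z v) := by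
    intro z hz v
    obtain ⟨hzU, ⟨htz, htX⟩, -⟩ := heV hz
    rw [hφa z hzU htz, ← hMa, map_zero, ← sum_smul_eVec, map_sum,
      Finset.sum_eq_zero]
    intro k _
    rw [map_smul, show fderiv ℝ t z (eVec (q + n) n k) = 0 from htX (Sum.inl k), smul_zero]
  have hinj : ∀ z ∈ e.source, Function.Injective (fderiv ℝ φ z) := by
    intro z hz
    refine injective_fderiv_of_leftInverse (ψ := e.symm)
      ((heφs z hz).differentiableAt (by simp)) ?_ ?_
    · rw [← heφ]
      exact (heS _ (e.map_source hz)).differentiableAt (by simp)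
    · rw [← heφ]
      filter_upwards [e.open_source.mem_nhds hz] with w hw using e.left_inv hw
  refine ⟨e.source, fun z hz => (heV hz).1, e.open_source, hze,
    fun z i k => R z (Pi.single i 1) k, ?_, ?_, ?_, e.target, e.open_target, φ, e.symm,
    fun z hz => (heφs z hz).contDiffWithinAt, fun y hy => (heS y hy).contDiffWithinAt, ?_, ?_, ?_,
    ?_, ?_⟩
  · exact fun z hz => (contDiffAt_pi.2 fun i => hRvs z hz _).contDiffWithinAt
  · intro z hz
    refine (Matrix.isUnit_iff_isUnit_det _).2 (Matrix.isUnit_det_of_right_inverse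
      (B := Matrix.of fun k j => M z (Pi.single k 1) j) ?_)
    ext i j
    have h1 := congrFun (hMR z hz (Pi.single i 1)) j
    rw [pi_eq_sum_univ' (R z (Pi.single i 1)), map_sum] at h1
    simpa [Matrix.mul_apply, Matrix.one_apply, Pi.single_apply, eq_comm] using h1
  · intro i j z hz
    simp only [sum_smul_eVec]
    refine lieB_eq_zero_of_fderiv_apply_eventuallyEq_const (heφs z hz)
      (hVd z hz _).differentiableAt (hVd z hz _).differentiableAt (hinj z hz)
      (a := (0, 0, Pi.single i 1)) (b := (0, 0, Pi.single j 1)) ?_ ?_ <;>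
    · filter_upwards [e.open_source.mem_nhds hz] with w hw
      rw [hvert w hw, hMR w hw]
  · rw [← heφ]
    exact e.image_source_eq_target
  · rw [← heφ]
    exact fun z hz => e.left_inv hz
  · rw [← heφ]
    exact fun w hw => e.right_inv hw
  · intro z hz i
    rw [sum_smul_eVec, hvert z hz, hMR z hz]
  · intro z hz i
    obtain ⟨hzU, ⟨htz, htX⟩, -⟩ := heV hz
    simp only [sum_smul_eVec]
    have h1 : fderiv ℝ t z (fderiv ℝ F z (0, R z (Pi.single i 1))) = 0 := by
      rw [hDF, map_neg, map_sum, neg_eq_zero]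
      refine Finset.sum_eq_zero fun k _ => ?_
      rw [map_smul, show fderiv ℝ t z (W k z) = 0 from htX (Sum.inr k), smul_zero]
    have h2 : π (fderiv ℝ F z (0, R z (Pi.single i 1))).1 = Pi.single i 1 := by
      rw [← hMa, hMR z hz]
    have h3 : lieB F (fun w => (0, R w (Pi.single i 1))) z =
        (0, fderiv ℝ (fun w => R w (Pi.single i 1)) z (F z)) -
          fderiv ℝ F z (0, R z (Pi.single i 1)) := by
      rw [lieB, (hVd z hz _).fderiv]
      rfl
    rw [h3, map_sub, hvert z hz, hφa z hzU htz, h1, h2]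
    constructor <;> simp
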